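/- Let λ = √((5+√13)/2), ρ = (−√(λ²−4) + i·√(8−λ²))/2 and τ = (−√(λ²−1) − i·√(5−λ²))/2, and let u₂ = (√(λ²−2)/3, √(λ²−2)/(√3·λ), −(λ²−3)/√3), u₃ = ((λ²−2)/(√3·λ), −(λ²−2)/3, 0) in ℂ³. Then the vector f' = ((λ²−1)·conj(ρ)²/(λ(λ²−2)), conj(τ)²/√3, 1/((λ²−2)√(λ²−1))) ∈ ℂ³ satisfies f' = −√((λ²−4)/3)·u₂ + (−(λ²−2)/(2√3) + i·√(λ²−3)/2)·u₃, and its complex conjugate satisfies conj(f') = −√((λ²−4)/3)·u₂ + (−(λ²−2)/(2√3) − i·√(λ²−3)/2)·u₃. -/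

import Mathlib

namespace AsaedaHaagerupStmt6

noncomputable def lam : ℝ := Real.sqrt ((5 + Real.sqrt 13) / 2)

noncomputable def rho : ℂ :=
  (-Complex.ofReal (Real.sqrt (lam ^ 2 - 4)) +
    Complex.ofReal (Real.sqrt (8 - lam ^ 2)) * Complex.I) / 2

noncomputable def tau : ℂ :=
  (-Complex.ofReal (Real.sqrt (lam ^ 2 - 1)) -
    Complex.ofReal (Real.sqrt (5 - lam ^ 2)) * Complex.I) / 2

noncomputable def u2 : Fin 3 → ℂ :=
  ![Complex.ofReal (Real.sqrt (lam ^ 2 - 2) / 3),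
    Complex.ofReal (Real.sqrt (lam ^ 2 - 2) / (Real.sqrt 3 * lam)),
    Complex.ofReal (-((lam ^ 2 - 3) / Real.sqrt 3))]

noncomputable def u3 : Fin 3 → ℂ :=
  ![Complex.ofReal ((lam ^ 2 - 2) / (Real.sqrt 3 * lam)),
    Complex.ofReal (-((lam ^ 2 - 2) / 3)), 0]

noncomputable def f' : Fin 3 → ℂ :=
  ![Complex.ofReal (lam ^ 2 - 1) * (starRingEnd ℂ rho) ^ 2 /
      (Complex.ofReal lam * Complex.ofReal (lam ^ 2 - 2)),
    (starRingEnd ℂ tau) ^ 2 / Complex.ofReal (Real.sqrt 3),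
    Complex.ofReal (1 / ((lam ^ 2 - 2) * Real.sqrt (lam ^ 2 - 1)))]

/-!
With `x = λ²` the quartic reads `x² = 5x - 3`, giving relations such as `(x - 1)(x - 4) = 1` and
`x(x - 2)(x - 4) = 3`. Hence each product of two square roots occurring in the claim has a closed
form, found by comparing squares of nonnegative reals. Since `u₂` and `u₃` are real, the real and
imaginary parts of each coordinate can then be compared separately, and conjugating the
first expansion gives the second.
-/

theorem lam_pos : 0 < lam := Real.sqrt_pos.2 (by positivity)

theorem lam_sq : lam ^ 2 = (5 + √13) / 2 := Real.sq_sqrt (by positivity)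

theorem lam_pow_four : lam ^ 4 = 5 * lam ^ 2 - 3 := by
  have sq_sqrt_thirteen : √13 ^ 2 = 13 := Real.sq_sqrt (by norm_num)
  rw [show lam ^ 4 = (lam ^ 2) ^ 2 by ring, lam_sq]
  linear_combination sq_sqrt_thirteen / 4

theorem four_lt_lam_sq : 4 < lam ^ 2 := by
  have three_lt : 3 < √13 := Real.lt_sqrt_of_sq_lt (by norm_num)
  linarith [lam_sq]

theorem lam_sq_lt_five : lam ^ 2 < 5 := by
  have lt_five : √13 < 5 := (Real.sqrt_lt' (by norm_num)).2 (by norm_num)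
  linarith [lam_sq]

theorem sqrt_mul_sqrt_eq {a b c : ℝ} (ha : 0 ≤ a) (hc : 0 ≤ c) (h : a * b = c ^ 2) :
    √a * √b = c := by
  rw [← Real.sqrt_mul ha, h, Real.sqrt_sq hc]

theorem sqrt_lam_sq_sub_four_mul_sqrt_eight_sub :
    √(lam ^ 2 - 4) * √(8 - lam ^ 2) =
      √(lam ^ 2 - 3) * (lam ^ 2 - 2) ^ 2 / (√3 * (lam ^ 2 - 1)) := by
  have four_lt := four_lt_lam_sq
  have sub_one_pos : 0 < lam ^ 2 - 1 := by linarith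
  refine sqrt_mul_sqrt_eq (by linarith) (by positivity) ?_
  rw [div_pow, mul_pow, mul_pow, Real.sq_sqrt (by linarith), Real.sq_sqrt zero_le_three]
  field_simp
  linear_combination (-lam ^ 6 + 3 * lam ^ 4 + 12 * lam ^ 2 - 16) * lam_pow_four

theorem sqrt_lam_sq_sub_one_mul_sqrt_five_sub :
    √(lam ^ 2 - 1) * √(5 - lam ^ 2) = √(lam ^ 2 - 3) * (lam ^ 2 - 2) / √3 := by
  have four_lt := four_lt_lam_sq
  have sub_two_pos : 0 < lam ^ 2 - 2 := by linarith
  refine sqrt_mul_sqrt_eq (by linarith) (by positivity) ?_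
  rw [div_pow, mul_pow, Real.sq_sqrt (by linarith), Real.sq_sqrt zero_le_three]
  linear_combination -(lam ^ 2 + 1) / 3 * lam_pow_four

theorem sqrt_lam_sq_sub_four_div_three_mul_sqrt_sub_two :
    √((lam ^ 2 - 4) / 3) * √(lam ^ 2 - 2) = 1 / lam := by
  have four_lt := four_lt_lam_sq
  have lam_ne_zero := lam_pos.ne'
  refine sqrt_mul_sqrt_eq (by linarith) (one_div_nonneg.2 lam_pos.le) ?_
  field_simp
  linear_combination (lam ^ 2 - 1) * lam_pow_four

theorem sqrt_lam_sq_sub_one_mul_sqrt_sub_four_div_three :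
    √(lam ^ 2 - 1) * √((lam ^ 2 - 4) / 3) = 1 / √3 := by
  have four_lt := four_lt_lam_sq
  refine sqrt_mul_sqrt_eq (by linarith) (by positivity) ?_
  rw [div_pow, Real.sq_sqrt zero_le_three]
  linear_combination lam_pow_four / 3

theorem ofReal_add_ofReal_mul_I_div_two_sq (a b : ℝ) :
    ((a + b * Complex.I) / 2) ^ 2 =
      ((a ^ 2 - b ^ 2) / 4 : ℝ) + (a * b / 2 : ℝ) * Complex.I := by
  push_cast
  linear_combination (b : ℂ) ^ 2 / 4 * Complex.I_sq

theorem conj_rho_sq :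
    (starRingEnd ℂ rho) ^ 2 = ((lam ^ 2 - 6) / 2 : ℝ) +
      (√(lam ^ 2 - 3) * (lam ^ 2 - 2) ^ 2 / (√3 * (lam ^ 2 - 1)) / 2 : ℝ) * Complex.I := by
  have conj_rho : starRingEnd ℂ rho =
      ((-√(lam ^ 2 - 4) : ℝ) + (-√(8 - lam ^ 2) : ℝ) * Complex.I) / 2 := by
    simp [rho, Complex.conj_ofNat]
  rw [conj_rho, ofReal_add_ofReal_mul_I_div_two_sq, neg_sq, neg_sq, neg_mul_neg,
    sqrt_lam_sq_sub_four_mul_sqrt_eight_sub, Real.sq_sqrt (by linarith [four_lt_lam_sq]),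
    Real.sq_sqrt (by linarith [lam_sq_lt_five])]
  push_cast
  ring

theorem conj_tau_sq :
    (starRingEnd ℂ tau) ^ 2 = ((lam ^ 2 - 3) / 2 : ℝ) +
      (-(√(lam ^ 2 - 3) * (lam ^ 2 - 2) / √3 / 2) : ℝ) * Complex.I := by
  have conj_tau : starRingEnd ℂ tau =
      ((-√(lam ^ 2 - 1) : ℝ) + (√(5 - lam ^ 2) : ℝ) * Complex.I) / 2 := by
    simp [tau, Complex.conj_ofNat]
  rw [conj_tau, ofReal_add_ofReal_mul_I_div_two_sq, neg_sq, neg_mul,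
    sqrt_lam_sq_sub_one_mul_sqrt_five_sub, Real.sq_sqrt (by linarith [four_lt_lam_sq]),
    Real.sq_sqrt (by linarith [lam_sq_lt_five])]
  push_cast
  ring

theorem f'_zero :
    f' 0 = (-((lam ^ 2 + 3) / (6 * lam)) : ℝ) +
      (√(lam ^ 2 - 3) / 2 * ((lam ^ 2 - 2) / (√3 * lam)) : ℝ) * Complex.I := by
  have four_lt := four_lt_lam_sq
  have lam_ne_zero := lam_pos.ne'
  have sub_one_ne_zero : lam ^ 2 - 1 ≠ 0 := by linarith
  have sub_two_ne_zero : lam ^ 2 - 2 ≠ 0 := by linarith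
  have re_eq : (lam ^ 2 - 1) * ((lam ^ 2 - 6) / 2) / (lam * (lam ^ 2 - 2)) =
      -((lam ^ 2 + 3) / (6 * lam)) := by
    field_simp
    linear_combination 8 * lam_pow_four
  have im_eq : (lam ^ 2 - 1) * (√(lam ^ 2 - 3) * (lam ^ 2 - 2) ^ 2 / (√3 * (lam ^ 2 - 1)) / 2) /
      (lam * (lam ^ 2 - 2)) = √(lam ^ 2 - 3) / 2 * ((lam ^ 2 - 2) / (√3 * lam)) := by
    field_simp
  rw [← re_eq, ← im_eq]
  simp only [f', Matrix.cons_val_zero, conj_rho_sq]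
  push_cast
  ring

theorem f'_one :
    f' 1 = ((lam ^ 2 - 3) / (2 * √3) : ℝ) +
      (-(√(lam ^ 2 - 3) / 2 * ((lam ^ 2 - 2) / 3)) : ℝ) * Complex.I := by
  have im_eq : √(lam ^ 2 - 3) * (lam ^ 2 - 2) / √3 / 2 / √3 =
      √(lam ^ 2 - 3) / 2 * ((lam ^ 2 - 2) / 3) := by
    field_simp
    rw [Real.sq_sqrt zero_le_three]
    ring
  rw [← im_eq]
  simp only [f', Matrix.cons_val_one, Matrix.cons_val_zero, conj_tau_sq]
  push_cast
  ring

theorem f'_two : f' 2 = (√((lam ^ 2 - 4) / 3) * ((lam ^ 2 - 3) / √3) : ℝ) := by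
  have four_lt := four_lt_lam_sq
  have sub_two_ne_zero : lam ^ 2 - 2 ≠ 0 := by linarith
  have sqrt_ne_zero : √(lam ^ 2 - 1) ≠ 0 := (Real.sqrt_pos.2 (by linarith)).ne'
  have sub_two_mul_sub_three : (lam ^ 2 - 2) * (lam ^ 2 - 3) = 3 := by
    linear_combination lam_pow_four
  refine congrArg Complex.ofReal ?_
  rw [div_eq_iff (mul_ne_zero sub_two_ne_zero sqrt_ne_zero)]
  symm
  calc √((lam ^ 2 - 4) / 3) * ((lam ^ 2 - 3) / √3) * ((lam ^ 2 - 2) * √(lam ^ 2 - 1))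
      = √(lam ^ 2 - 1) * √((lam ^ 2 - 4) / 3) * ((lam ^ 2 - 2) * (lam ^ 2 - 3)) / √3 := by ring
    _ = 1 / √3 * 3 / √3 := by
      rw [sqrt_lam_sq_sub_one_mul_sqrt_sub_four_div_three, sub_two_mul_sub_three]
    _ = 1 := by
      field_simp
      rw [Real.sq_sqrt zero_le_three]

theorem neg_ofReal_mul_add_mul_eq (k p q v w : ℝ) :
    -(k : ℂ) * v + (p + q * Complex.I) * w =
      (-k * v + p * w : ℝ) + (q * w : ℝ) * Complex.I := by
  push_cast
  ring

theorem f'_zero_expansion :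
    f' 0 = -(√((lam ^ 2 - 4) / 3) : ℂ) * u2 0 +
      ((-((lam ^ 2 - 2) / (2 * √3)) : ℝ) + (√(lam ^ 2 - 3) / 2 : ℝ) * Complex.I) * u3 0 := by
  have lam_ne_zero := lam_pos.ne'
  simp only [u2, u3, Matrix.cons_val_zero]
  rw [f'_zero, neg_ofReal_mul_add_mul_eq]
  congr 2
  calc -((lam ^ 2 + 3) / (6 * lam))
      = -(1 / lam / 3) - (lam ^ 2 - 2) ^ 2 / (2 * 3 * lam) := by
        field_simp
        linear_combination 6 * lam_pow_four
    _ = -√((lam ^ 2 - 4) / 3) * (√(lam ^ 2 - 2) / 3) +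
          -((lam ^ 2 - 2) / (2 * √3)) * ((lam ^ 2 - 2) / (√3 * lam)) := by
        rw [← sqrt_lam_sq_sub_four_div_three_mul_sqrt_sub_two]
        field_simp
        rw [Real.sq_sqrt zero_le_three]
        ring

theorem f'_one_expansion :
    f' 1 = -(√((lam ^ 2 - 4) / 3) : ℂ) * u2 1 +
      ((-((lam ^ 2 - 2) / (2 * √3)) : ℝ) + (√(lam ^ 2 - 3) / 2 : ℝ) * Complex.I) * u3 1 := by
  have lam_ne_zero := lam_pos.ne'
  simp only [u2, u3, Matrix.cons_val_one, Matrix.cons_val_zero]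
  rw [f'_one, neg_ofReal_mul_add_mul_eq, ← mul_neg]
  congr 2
  calc (lam ^ 2 - 3) / (2 * √3)
      = -(1 / lam / (√3 * lam)) + (lam ^ 2 - 2) ^ 2 / (2 * √3 * 3) := by
        field_simp
        linear_combination (2 - lam ^ 2) * lam_pow_four
    _ = -√((lam ^ 2 - 4) / 3) * (√(lam ^ 2 - 2) / (√3 * lam)) +
          -((lam ^ 2 - 2) / (2 * √3)) * -((lam ^ 2 - 2) / 3) := by
        rw [← sqrt_lam_sq_sub_four_div_three_mul_sqrt_sub_two]
        ring

theorem f'_two_expansion :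
    f' 2 = -(√((lam ^ 2 - 4) / 3) : ℂ) * u2 2 +
      ((-((lam ^ 2 - 2) / (2 * √3)) : ℝ) + (√(lam ^ 2 - 3) / 2 : ℝ) * Complex.I) * u3 2 := by
  rw [f'_two]
  simp [u2, u3]

theorem isSelfAdjoint_u2 : IsSelfAdjoint u2 := by
  ext j
  fin_cases j <;> exact Complex.conj_ofReal _

theorem isSelfAdjoint_u3 : IsSelfAdjoint u3 := by
  ext j
  fin_cases j
  exacts [Complex.conj_ofReal _, Complex.conj_ofReal _, star_zero ℂ]

theorem asaeda_haagerup_stmt6 :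
    f' = (-Complex.ofReal (Real.sqrt ((lam ^ 2 - 4) / 3))) • u2 +
        (Complex.ofReal (-((lam ^ 2 - 2) / (2 * Real.sqrt 3))) +
          Complex.ofReal (Real.sqrt (lam ^ 2 - 3) / 2) * Complex.I) • u3 ∧
    (fun k => (starRingEnd ℂ) (f' k)) =
      (-Complex.ofReal (Real.sqrt ((lam ^ 2 - 4) / 3))) • u2 +
        (Complex.ofReal (-((lam ^ 2 - 2) / (2 * Real.sqrt 3))) -
          Complex.ofReal (Real.sqrt (lam ^ 2 - 3) / 2) * Complex.I) • u3 := by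
  have expansion : f' = (-Complex.ofReal (√((lam ^ 2 - 4) / 3))) • u2 +
      (Complex.ofReal (-((lam ^ 2 - 2) / (2 * √3))) +
        Complex.ofReal (√(lam ^ 2 - 3) / 2) * Complex.I) • u3 := by
    ext j
    fin_cases j
    exacts [f'_zero_expansion, f'_one_expansion, f'_two_expansion]
  refine ⟨expansion, ?_⟩
  change star f' = _
  rw [expansion, star_add, star_smul, star_smul, isSelfAdjoint_u2.star_eq,
    isSelfAdjoint_u3.star_eq]
  congr 2
  · simp
  · simp [sub_eq_add_neg]

end AsaedaHaagerupStmt6
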